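/- arXiv:2502.02781 — 4 statements merged into one kernel-verified Lean document; each statement's English description precedes it below -/
import Mathlib

section
/- Let n, p, d be positive integers, let Δ be a symmetric invertible real p×p matrix, S a symmetric invertible real n×n matrix, A a real p×d matrix, μ ∈ ℝ^p, and X, Z real n×p matrices. For V ∈ ℝ^{n×d} define ℓ(M; V) = tr((M − 1_n μᵀ − V Aᵀ) Δ⁻¹ (M − 1_n μᵀ − V Aᵀ)ᵀ S⁻¹). Then the function V ↦ ℓ(X; V) − ℓ(Z; V) is constant on ℝ^{n×d} if and only if X Δ⁻¹ A = Z Δ⁻¹ A. -/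
open Matrix

theorem aux_expand {n p d : ℕ} (D : Matrix (Fin p) (Fin p) ℝ) (hD : Dᵀ = D)
    (T : Matrix (Fin n) (Fin n) ℝ) (hT : Tᵀ = T) (A : Matrix (Fin p) (Fin d) ℝ)
    (P : Matrix (Fin n) (Fin p) ℝ) (V : Matrix (Fin n) (Fin d) ℝ) :
    trace ((P - V * Aᵀ) * D * (P - V * Aᵀ)ᵀ * T) =
      trace (P * D * Pᵀ * T) - 2 * trace (P * D * A * (Vᵀ * T))
        + trace (V * Aᵀ * D * (V * Aᵀ)ᵀ * T) := by
  have h1 : trace (V * Aᵀ * D * Pᵀ * T) = trace (P * D * A * (Vᵀ * T)) := by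
    rw [← trace_transpose]
    simp only [transpose_mul, transpose_transpose, hD, hT]
    rw [trace_mul_comm]
    simp only [Matrix.mul_assoc]
  have h2 : P * D * (V * Aᵀ)ᵀ * T = P * D * A * (Vᵀ * T) := by
    simp only [transpose_mul, transpose_transpose, Matrix.mul_assoc]
  rw [transpose_sub]
  simp only [Matrix.sub_mul, Matrix.mul_sub, trace_sub]
  rw [h1, h2]
  ring

theorem stmt_0 (n p d : ℕ) (hn : 0 < n) (hp : 0 < p) (hd : 0 < d)
    (Δ : Matrix (Fin p) (Fin p) ℝ) (hΔs : Δᵀ = Δ) (hΔ : IsUnit Δ.det)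
    (S : Matrix (Fin n) (Fin n) ℝ) (hSs : Sᵀ = S) (hS : IsUnit S.det)
    (A : Matrix (Fin p) (Fin d) ℝ) (μ : Fin p → ℝ)
    (X Z : Matrix (Fin n) (Fin p) ℝ)
    (ℓ : Matrix (Fin n) (Fin p) ℝ → Matrix (Fin n) (Fin d) ℝ → ℝ)
    (hℓ : ∀ M V, ℓ M V =
      Matrix.trace ((M - vecMulVec (fun _ => 1) μ - V * Aᵀ) * Δ⁻¹ *
        (M - vecMulVec (fun _ => 1) μ - V * Aᵀ)ᵀ * S⁻¹)) :
    (∃ c : ℝ, ∀ V : Matrix (Fin n) (Fin d) ℝ, ℓ X V - ℓ Z V = c) ↔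
      X * Δ⁻¹ * A = Z * Δ⁻¹ * A := by
  have hD : (Δ⁻¹)ᵀ = Δ⁻¹ := by rw [transpose_nonsing_inv, hΔs]
  have hT : (S⁻¹)ᵀ = S⁻¹ := by rw [transpose_nonsing_inv, hSs]
  have key : ∃ k : ℝ, ∀ V : Matrix (Fin n) (Fin d) ℝ, ℓ X V - ℓ Z V =
      k - 2 * trace ((X * Δ⁻¹ * A - Z * Δ⁻¹ * A) * (Vᵀ * S⁻¹)) := by
    refine ⟨trace ((X - vecMulVec (fun _ => 1) μ) * Δ⁻¹ * (X - vecMulVec (fun _ => 1) μ)ᵀ * S⁻¹)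
      - trace ((Z - vecMulVec (fun _ => 1) μ) * Δ⁻¹ * (Z - vecMulVec (fun _ => 1) μ)ᵀ * S⁻¹), ?_⟩
    intro V
    have h3 : X * Δ⁻¹ * A - Z * Δ⁻¹ * A = (X - vecMulVec (fun _ => 1) μ) * Δ⁻¹ * A
        - (Z - vecMulVec (fun _ => 1) μ) * Δ⁻¹ * A := by
      simp only [Matrix.sub_mul]
      abel
    rw [hℓ, hℓ, aux_expand _ hD _ hT, aux_expand _ hD _ hT, h3, Matrix.sub_mul _ _ (Vᵀ * S⁻¹),
      trace_sub]
    ring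
  obtain ⟨k, hk⟩ := key
  constructor
  · rintro ⟨c, hc⟩
    have h0 := hc 0
    have h1 := hc (S * (X * Δ⁻¹ * A - Z * Δ⁻¹ * A))
    rw [hk] at h0 h1
    rw [transpose_mul, hSs, Matrix.mul_assoc _ S, Matrix.mul_nonsing_inv _ hS,
      Matrix.mul_one] at h1
    simp only [transpose_zero, Matrix.zero_mul, Matrix.mul_zero, trace_zero] at h0
    have h2 : trace ((X * Δ⁻¹ * A - Z * Δ⁻¹ * A) * (X * Δ⁻¹ * A - Z * Δ⁻¹ * A)ᵀ) = 0 := by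
      linarith
    rw [← conjTranspose_eq_transpose_of_trivial, trace_mul_conjTranspose_self_eq_zero_iff] at h2
    exact sub_eq_zero.mp h2
  · intro h
    refine ⟨k, fun V => ?_⟩
    rw [hk, h]
    simp
end

section
/- Let H be a symmetric invertible real n×n matrix with c := 1_nᵀ H⁻¹ 1_n ≠ 0, let X be a real n×p matrix, F a real n×r matrix, and C a real p×r matrix. Set μ̂ = (Xᵀ − C Fᵀ) H⁻¹ 1_n · c⁻¹ and H^c = I_n − c⁻¹ · 1_n 1_nᵀ H⁻¹. Then X − 1_n μ̂ᵀ − F Cᵀ = H^c X − H^c F Cᵀ = H^c (X − F Cᵀ). -/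
open Matrix

theorem stmt_8 (n p r : ℕ)
    (H : Matrix (Fin n) (Fin n) ℝ) (hHs : Hᵀ = H) (hH : IsUnit H.det)
    (X : Matrix (Fin n) (Fin p) ℝ) (F : Matrix (Fin n) (Fin r) ℝ)
    (C : Matrix (Fin p) (Fin r) ℝ)
    (c : ℝ) (hc : c = (fun _ => (1 : ℝ)) ⬝ᵥ (H⁻¹ *ᵥ fun _ => (1 : ℝ))) (hc0 : c ≠ 0)
    (μhat : Fin p → ℝ) (hμ : μhat = c⁻¹ • ((Xᵀ - C * Fᵀ) *ᵥ (H⁻¹ *ᵥ fun _ => (1 : ℝ))))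
    (Hc : Matrix (Fin n) (Fin n) ℝ)
    (hHc : Hc = 1 - c⁻¹ • (vecMulVec (fun _ => 1) (fun _ => 1) * H⁻¹)) :
    X - vecMulVec (fun _ => 1) μhat - F * Cᵀ = Hc * X - Hc * (F * Cᵀ) ∧
    Hc * X - Hc * (F * Cᵀ) = Hc * (X - F * Cᵀ) := by
  have hT : (H⁻¹)ᵀ = H⁻¹ := by rw [Matrix.transpose_nonsing_inv, hHs]
  have h1 : (Xᵀ - C * Fᵀ) = (X - F * Cᵀ)ᵀ := by
    simp [Matrix.transpose_sub, Matrix.transpose_mul]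
  have h2 : (H⁻¹ *ᵥ fun _ => (1 : ℝ)) = (fun _ => (1 : ℝ)) ᵥ* H⁻¹ := by
    conv_lhs => rw [← hT, Matrix.mulVec_transpose]
  have key : vecMulVec (fun _ : Fin n => (1 : ℝ)) μhat
      = c⁻¹ • (vecMulVec (fun _ => 1) (fun _ => 1) * H⁻¹) * (X - F * Cᵀ) := by
    rw [hμ, h1, h2, Matrix.mulVec_transpose, Matrix.vecMulVec_smul, Matrix.smul_mul,
      Matrix.vecMulVec_mul, Matrix.vecMulVec_mul]
  refine ⟨?_, (Matrix.mul_sub _ _ _).symm⟩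
  rw [← Matrix.mul_sub, key, hHc, Matrix.sub_mul, Matrix.one_mul]
  abel
end

section
/- Let n, p be positive integers, let M be a real n×p matrix such that Σ := (1/n) Mᵀ M is positive definite. Then for every positive definite real p×p matrix Δ, −(n/2)·log(det Δ) − (1/2)·tr(M Δ⁻¹ Mᵀ) ≤ −(n/2)·log(det Σ) − (n·p)/2, with equality if and only if Δ = Σ. -/
open Matrix

theorem aux_C {p : ℕ} (C : Matrix (Fin p) (Fin p) ℝ) (hC : C.PosDef) :
    Real.log C.det ≤ C.trace - p ∧ (Real.log C.det = C.trace - p → C = 1) := by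
  have hpos := hC.eigenvalues_pos
  have hdet : Real.log C.det = ∑ i, Real.log (hC.1.eigenvalues i) := by
    rw [hC.1.det_eq_prod_eigenvalues]
    simp only [RCLike.ofReal_real_eq_id, id]
    exact Real.log_prod (fun i _ => (hpos i).ne')
  have htr : C.trace - p = ∑ i, (hC.1.eigenvalues i - 1) := by
    rw [hC.1.trace_eq_sum_eigenvalues]
    simp
  have hle : ∀ i ∈ Finset.univ, Real.log (hC.1.eigenvalues i) ≤ hC.1.eigenvalues i - 1 :=
    fun i _ => Real.log_le_sub_one_of_pos (hpos i)
  rw [hdet, htr]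
  refine ⟨Finset.sum_le_sum hle, fun h => ?_⟩
  rw [Finset.sum_eq_sum_iff_of_le hle] at h
  have h1 : ∀ i, hC.1.eigenvalues i = 1 := by
    intro i
    by_contra hne
    exact absurd (h i (Finset.mem_univ i)) (Real.log_lt_sub_one_of_pos (hpos i) hne).ne
  have h2 := hC.1.spectral_theorem
  have h3 : (RCLike.ofReal ∘ hC.1.eigenvalues : Fin p → ℝ) = 1 := by
    funext i; simp [h1]
  rw [h3] at h2
  rw [h2]
  have h4 : (diagonal 1 : Matrix (Fin p) (Fin p) ℝ) = 1 := diagonal_one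
  rw [h4, map_one]

theorem stmt_11 (n p : ℕ) (hn : 0 < n) (hp : 0 < p)
    (M : Matrix (Fin n) (Fin p) ℝ)
    (S : Matrix (Fin p) (Fin p) ℝ) (hSdef : S = (1 / (n : ℝ)) • (Mᵀ * M))
    (hS : S.PosDef) :
    ∀ Δ : Matrix (Fin p) (Fin p) ℝ, Δ.PosDef →
      (-((n : ℝ) / 2) * Real.log Δ.det - (1 / 2) * trace (M * Δ⁻¹ * Mᵀ)
          ≤ -((n : ℝ) / 2) * Real.log S.det - ((n : ℝ) * p) / 2) ∧
      ((-((n : ℝ) / 2) * Real.log Δ.det - (1 / 2) * trace (M * Δ⁻¹ * Mᵀ)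
          = -((n : ℝ) / 2) * Real.log S.det - ((n : ℝ) * p) / 2) ↔ Δ = S) := by
  intro Δ hΔ
  have hn' : (0 : ℝ) < n := by exact_mod_cast hn
  have hMM : Mᵀ * M = (n : ℝ) • S := by
    rw [hSdef, smul_smul, mul_one_div_cancel hn'.ne', one_smul]
  have htr : trace (M * Δ⁻¹ * Mᵀ) = n * trace (S * Δ⁻¹) := by
    rw [trace_mul_comm, ← Matrix.mul_assoc, hMM, smul_mul, trace_smul, smul_eq_mul]
  have hΔu : IsUnit Δ.det := hΔ.det_pos.ne'.isUnit
  obtain ⟨B, hB⟩ : ∃ B : Matrix (Fin p) (Fin p) ℝ, Δ⁻¹ = Bᴴ * B := by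
    open scoped MatrixOrder Matrix.Norms.L2Operator in
    exact CStarAlgebra.nonneg_iff_eq_star_mul_self.mp hΔ.inv.posSemidef.nonneg
  have hdB : B.det * B.det = Δ.det⁻¹ := by
    have := congrArg det hB
    rw [det_mul, det_conjTranspose, det_nonsing_inv, Ring.inverse_eq_inv'] at this
    simpa using this.symm
  have hBu : IsUnit B.det := by
    rw [isUnit_iff_ne_zero]
    intro h0
    rw [h0] at hdB
    exact (inv_pos.mpr hΔ.det_pos).ne (by simpa using hdB)
  have hBU : IsUnit B := (isUnit_iff_isUnit_det B).mpr hBu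
  have hC : (B * S * Bᴴ).PosDef := by
    apply hS.mul_mul_conjTranspose_same
    exact vecMul_injective_of_isUnit hBU
  have hCt : (B * S * Bᴴ).trace = trace (S * Δ⁻¹) := by
    rw [hB, Matrix.mul_assoc, trace_mul_comm, Matrix.mul_assoc]
  have hCd : Real.log (B * S * Bᴴ).det = Real.log S.det - Real.log Δ.det := by
    have : (B * S * Bᴴ).det = S.det * Δ.det⁻¹ := by
      rw [det_mul, det_mul, det_conjTranspose, ← hdB]
      simp only [star_trivial]; ring
    rw [this, Real.log_mul hS.det_pos.ne' (inv_ne_zero hΔ.det_pos.ne'), Real.log_inv]; ring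
  obtain ⟨h1, h2⟩ := aux_C _ hC
  rw [hCt, hCd] at h1 h2
  rw [htr]
  refine ⟨by nlinarith, fun h => ?_, fun h => ?_⟩
  · have h3 := h2 (by
      apply mul_left_cancel₀ hn'.ne'
      linarith)
    have h4 : S * Bᴴ * B = 1 := by
      rw [Matrix.mul_assoc] at h3
      exact mul_eq_one_comm.mp h3
    rw [Matrix.mul_assoc, ← hB] at h4
    calc Δ = S * Δ⁻¹ * Δ := by rw [h4, Matrix.one_mul]
      _ = S := by rw [Matrix.mul_assoc, nonsing_inv_mul _ hΔu, Matrix.mul_one]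
  · subst h
    rw [mul_nonsing_inv _ hΔu, trace_one, Fintype.card_fin]
    ring
end

section
/- Let W_θ be a symmetric invertible real n×n matrix with c := 1_nᵀ W_θ² 1_n ≠ 0, let X be a real n×p matrix, F a real n×r matrix, and C a real p×r matrix. Set μ̃ = (Xᵀ − C Fᵀ) W_θ² 1_n · c⁻¹ and W^c_θ = I_n − c⁻¹ · 1_n 1_nᵀ W_θ². Then X − 1_n μ̃ᵀ − F Cᵀ = W^c_θ X − W^c_θ F Cᵀ = W^c_θ (X − F Cᵀ). -/
open Matrix

theorem stmt_16 (n p r : ℕ)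
    (W : Matrix (Fin n) (Fin n) ℝ) (hWs : Wᵀ = W) (hW : IsUnit W.det)
    (c : ℝ) (hc : c = (fun _ => (1 : ℝ)) ⬝ᵥ ((W * W) *ᵥ fun _ => (1 : ℝ))) (hc0 : c ≠ 0)
    (X : Matrix (Fin n) (Fin p) ℝ) (F : Matrix (Fin n) (Fin r) ℝ)
    (C : Matrix (Fin p) (Fin r) ℝ)
    (μtilde : Fin p → ℝ)
    (hμ : μtilde = c⁻¹ • ((Xᵀ - C * Fᵀ) *ᵥ ((W * W) *ᵥ fun _ => (1 : ℝ))))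
    (Wc : Matrix (Fin n) (Fin n) ℝ)
    (hWc : Wc = 1 - c⁻¹ • (vecMulVec (fun _ => 1) (fun _ => 1) * (W * W))) :
    X - vecMulVec (fun _ => 1) μtilde - F * Cᵀ = Wc * X - Wc * (F * Cᵀ) ∧
    Wc * X - Wc * (F * Cᵀ) = Wc * (X - F * Cᵀ) := by
  refine ⟨?_, (Matrix.mul_sub _ _ _).symm⟩
  have hS : (W * W)ᵀ = W * W := by rw [Matrix.transpose_mul, hWs]
  have hD : Xᵀ - C * Fᵀ = (X - F * Cᵀ)ᵀ := by
    simp [Matrix.transpose_sub, Matrix.transpose_mul]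
  have hv : (W * W) *ᵥ (fun _ => (1 : ℝ)) = (fun _ => (1 : ℝ)) ᵥ* (W * W) := by
    conv_rhs => rw [← hS]
    rw [Matrix.vecMul_transpose]
  have key : vecMulVec (fun _ : Fin n => (1 : ℝ)) μtilde
      = c⁻¹ • (vecMulVec (fun _ => 1) (fun _ => 1) * (W * W)) * (X - F * Cᵀ) := by
    rw [hμ, hD, Matrix.mulVec_transpose, hv, Matrix.smul_mul, Matrix.vecMulVec_mul,
      Matrix.vecMulVec_mul, Matrix.vecMulVec_smul]
  rw [← Matrix.mul_sub, hWc, Matrix.sub_mul, Matrix.one_mul, key]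
  abel
end
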